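/- arXiv:1211.0189 — 2 statements merged into one kernel-verified Lean document; each statement's English description precedes it below -/
import Mathlib

section
/- Let (f,g) be a Möbius pair of complex-valued arithmetic functions, not both identically zero. If the sum of 1/n over those natural numbers n in the support of f converges (i.e., supp(f) is thin), then the support of g possesses an asymptotic density, and this density is positive. -/
open Filter

open scoped Classical in
noncomputable def countIn (A : Set ℕ) (x : ℕ) : ℕ :=
  ((Finset.Icc 1 x).filter (fun n => n ∈ A)).card

/-- `A ⊆ ℕ` has asymptotic density `δ`. -/
def HasDensity (A : Set ℕ) (δ : ℝ) : Prop :=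
  Tendsto (fun x : ℕ => (countIn A x : ℝ) / x) atTop (nhds δ)

/-- `(f,g)` is a Möbius pair: `f(n) = ∑_{d ∣ n} g(d)` for all positive `n`. -/
def MobiusPair (f g : ℕ → ℂ) : Prop :=
  ∀ n : ℕ, 0 < n → f n = ∑ d ∈ n.divisors, g d

/-- `A` is thin: `∑_{a ∈ A} 1/a < ∞`. -/
def Thin (A : Set ℕ) : Prop := Summable (fun a : A => (1 : ℝ) / a)

/-!
By Möbius inversion `λ(n) g(n) = ∑ λ(d) f(d)`, where `λ` is the Liouville function and the sum runs
over the divisors `d` of `n` with `n / d` squarefree. Hence whether `g(n) = 0` depends only on which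
elements of `B = {d k² : f(d) ≠ 0}` divide `n`, and `B` is thin because `supp f` and the set of
squares are.

Let `B` be any thin set and `S` a set of positive integers such that membership in `S` depends only
on the divisors in `B`. Write `A` for the elements of `B` beyond `y`; the multiples of `A` have
upper density at most `∑_{a ∈ A} 1/a`, which is small. Off these multiples, membership in `S` is
periodic modulo `y!`, so `S` is a limit of periodic sets and has a density. If `m ∈ S`, then for
large `y` the progression `m` modulo `y!` stays in `S` except at multiples of `A`, and a solvable
system `n ≡ m (mod y!)`, `a ∣ n` has density at most `m / (a y!)`; so `S` has density at least
`(1 - m ∑_{a ∈ A} 1/a) / y! > 0`.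
-/

open Pointwise Set Topology

/-- The sum `∑_{a ∈ A} 1/a`, with `1/0 = 0`; it is `0` when the series diverges. -/
noncomputable def recipSum (A : Set ℕ) : ℝ := ∑' a : A, (1 : ℝ) / a

/-- The set of multiples `ℳ(A)` of a set `A` of natural numbers. -/
def multiplesOf (A : Set ℕ) : Set ℕ := {n | ∃ a ∈ A, a ∣ n}

/-- Whether a positive integer belongs to `S` depends only on which elements of `B` divide it.
The condition is symmetric in `m` and `n`, so an implication suffices. -/
def DeterminedByDivisors (B S : Set ℕ) : Prop :=
  ∀ ⦃m n : ℕ⦄, 0 < m → 0 < n → (∀ b ∈ B, b ∣ m ↔ b ∣ n) → m ∈ S → n ∈ S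

section Counting

theorem countIn_mono {A C : Set ℕ} (h : ∀ n, 0 < n → n ∈ A → n ∈ C) (x : ℕ) :
    countIn A x ≤ countIn C x := by
  refine Finset.card_le_card fun n hn => ?_
  simp only [Finset.mem_filter, Finset.mem_Icc] at hn ⊢
  exact ⟨hn.1, h n hn.1.1 hn.2⟩

theorem countIn_union_le (A C : Set ℕ) (x : ℕ) : countIn (A ∪ C) x ≤ countIn A x + countIn C x := by
  classical
  refine (Finset.card_le_card fun n hn => ?_).trans (Finset.card_union_le _ _)
  simp only [Finset.mem_filter, Finset.mem_union, mem_union, ← and_or_left] at hn ⊢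
  exact hn

theorem abs_countIn_sub_countIn_le {A C E : Set ℕ} (h : ∀ n, 0 < n → n ∉ E → (n ∈ A ↔ n ∈ C))
    (x : ℕ) : |(countIn A x : ℝ) - countIn C x| ≤ countIn E x := by
  have hAC : countIn A x ≤ countIn C x + countIn E x :=
    (countIn_mono (fun n hn hA => or_iff_not_imp_right.2 fun hE => (h n hn hE).1 hA) x).trans
      (countIn_union_le C E x)
  have hCA : countIn C x ≤ countIn A x + countIn E x :=
    (countIn_mono (fun n hn hC => or_iff_not_imp_right.2 fun hE => (h n hn hE).2 hC) x).trans
      (countIn_union_le A E x)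
  rify at hAC hCA
  rw [abs_sub_le_iff]
  constructor <;> linarith

theorem abs_countIn_modEq_sub_div_le {r : ℕ} (hr : 0 < r) (v x : ℕ) :
    |(countIn {n | n ≡ v [MOD r]} x : ℝ) - x / r| ≤ 1 := by
  have hcount : (countIn {n | n ≡ v [MOD r]} x : ℤ) =
      ⌊((x : ℚ) - v) / r⌋ - ⌊(-v : ℚ) / r⌋ := by
    have hfloor : ⌊(-v : ℚ) / r⌋ ≤ ⌊((x : ℚ) - v) / r⌋ := by
      gcongr
      linarith [Nat.cast_nonneg (α := ℚ) x]
    have h := Nat.Ioc_filter_modEq_card 0 x hr v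
    rw [Nat.cast_zero, zero_sub, max_eq_left (sub_nonneg.2 hfloor)] at h
    rw [← h, countIn]
    congr 2
    ext n
    simp only [Finset.mem_filter, Finset.mem_Icc, Finset.mem_Ioc, mem_ofPred_eq, Nat.succ_le_iff]
  have hbound : |(countIn {n | n ≡ v [MOD r]} x : ℚ) - x / r| ≤ 1 := by
    rw [← Int.cast_natCast (countIn _ x), hcount, Int.cast_sub, abs_sub_le_iff]
    have hsplit : (x : ℚ) / r = (x - v) / r - -v / r := by ring
    constructor <;> linarith [Int.floor_le (((x : ℚ) - v) / r), Int.floor_le ((-v : ℚ) / r),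
      Int.lt_floor_add_one (((x : ℚ) - v) / r), Int.lt_floor_add_one ((-v : ℚ) / r)]
  simpa using (Rat.cast_le (K := ℝ)).2 hbound

theorem countIn_dvd_inter_modEq_le {a M v : ℕ} (ha : 0 < a) (hM : 0 < M) (hv : 0 < v) (x : ℕ) :
    (countIn ({n | a ∣ n} ∩ {n | n ≡ v [MOD M]}) x : ℝ) ≤ v * x / (a * M) + 1 := by
  rcases eq_empty_or_nonempty ({n | a ∣ n} ∩ {n | n ≡ v [MOD M]}) with hempty | ⟨m, ham, hmv⟩
  · rw [hempty]
    simp only [countIn, mem_empty_iff_false, Finset.filter_false, Finset.card_empty, Nat.cast_zero]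
    positivity
  have hgcd : Nat.gcd a M ≤ v := Nat.le_of_dvd hv <|
    (hmv.dvd_iff (Nat.gcd_dvd_right a M)).1 ((Nat.gcd_dvd_left a M).trans ham)
  have hlcm : a * M ≤ v * Nat.lcm a M := by
    rw [← Nat.gcd_mul_lcm a M]
    gcongr
  have hsub : ∀ n, 0 < n → n ∈ {n | a ∣ n} ∩ {n | n ≡ v [MOD M]} → n ≡ m [MOD Nat.lcm a M] :=
    fun n _ hn => Nat.mod_lcm
      (((Nat.modEq_zero_iff_dvd).2 hn.1).trans ((Nat.modEq_zero_iff_dvd).2 ham).symm)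
      (hn.2.trans hmv.symm)
  have hlcm_pos : 0 < Nat.lcm a M := Nat.lcm_pos ha hM
  have hlcm' : (a * M : ℝ) ≤ v * Nat.lcm a M := mod_cast hlcm
  calc (countIn ({n | a ∣ n} ∩ {n | n ≡ v [MOD M]}) x : ℝ)
      ≤ countIn {n | n ≡ m [MOD Nat.lcm a M]} x := mod_cast countIn_mono hsub x
    _ ≤ x / Nat.lcm a M + 1 := by
        linarith [(abs_le.1 (abs_countIn_modEq_sub_div_le hlcm_pos m x)).2]
    _ ≤ v * x / (a * M) + 1 := by
        rw [add_le_add_iff_right, div_le_div_iff₀ (by positivity) (by positivity), mul_comm (v : ℝ),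
          mul_assoc]
        gcongr

open scoped Classical in
theorem countIn_multiplesOf_inter_le_sum (A C : Set ℕ) (x : ℕ) :
    countIn (multiplesOf A ∩ C) x ≤
      ∑ a ∈ Finset.Icc 1 x with a ∈ A, countIn ({n | a ∣ n} ∩ C) x := by
  refine (Finset.card_le_card fun n hn => ?_).trans Finset.card_biUnion_le
  simp only [Finset.mem_filter, Finset.mem_Icc] at hn
  obtain ⟨⟨hn0, hnx⟩, ⟨a, haA, han⟩, hnC⟩ := hn
  simp only [Finset.mem_biUnion, Finset.mem_filter, Finset.mem_Icc]
  exact ⟨a, ⟨⟨Nat.pos_of_dvd_of_pos han hn0, (Nat.le_of_dvd hn0 han).trans hnx⟩, haA⟩,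
    ⟨hn0, hnx⟩, han, hnC⟩

end Counting

section Thin

variable {A C : Set ℕ}

theorem thin_iff_summable_indicator :
    Thin A ↔ Summable (A.indicator fun n : ℕ => (1 : ℝ) / n) :=
  summable_subtype_iff_indicator (f := fun n : ℕ => (1 : ℝ) / n) (s := A)

theorem recipSum_eq_tsum_indicator (A : Set ℕ) :
    recipSum A = ∑' n, A.indicator (fun n : ℕ => (1 : ℝ) / n) n :=
  tsum_subtype A fun n : ℕ => (1 : ℝ) / n

theorem recipSum_nonneg (A : Set ℕ) : 0 ≤ recipSum A :=
  tsum_nonneg fun _ => by positivity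

theorem Thin.mono (hC : Thin C) (h : A ⊆ C) : Thin A := by
  simpa only [Thin, Function.comp_def, coe_inclusion] using
    Summable.comp_injective hC (inclusion_injective h)

theorem thin_range {ι : Type*} {φ : ι → ℕ} (hφ : Summable fun i => (1 : ℝ) / φ i) :
    Thin (range φ) := by
  unfold Thin
  simpa only [Function.comp_def, apply_rangeSplitting] using
    hφ.comp_injective (rangeSplitting_injective φ)

theorem thin_range_sq : Thin (range fun k : ℕ => k ^ 2) :=
  thin_range <| by simp

theorem Thin.mul (hA : Thin A) (hC : Thin C) : Thin (A * C) := by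
  have hprod : Summable fun p : A × C => (1 : ℝ) / ((p.1 * p.2 : ℕ) : ℝ) := by
    simpa only [Nat.cast_mul, one_div_mul_one_div] using
      Summable.mul_of_nonneg hA hC (fun _ => by positivity) (fun _ => by positivity)
  refine (thin_range hprod).mono ?_
  rintro _ ⟨a, ha, c, hc, rfl⟩
  exact ⟨(⟨a, ha⟩, ⟨c, hc⟩), rfl⟩

theorem Thin.sum_le_recipSum (hA : Thin A) {t : Finset ℕ} (ht : ∀ a ∈ t, a ∈ A) :
    ∑ a ∈ t, (1 : ℝ) / a ≤ recipSum A := by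
  rw [recipSum_eq_tsum_indicator,
    Finset.sum_congr rfl fun a ha => (indicator_of_mem (ht a ha) fun n : ℕ => (1 : ℝ) / n).symm]
  exact (thin_iff_summable_indicator.1 hA).sum_le_tsum t fun n _ =>
    indicator_nonneg (fun _ _ => by positivity) n

theorem Thin.tendsto_recipSum_inter_Ioi (hA : Thin A) :
    Tendsto (fun y : ℕ => recipSum (A ∩ Ioi y)) atTop (𝓝 0) := by
  simp only [recipSum_eq_tsum_indicator]
  rw [← tsum_zero (α := ℝ) (β := ℕ)]
  refine tendsto_tsum_of_dominated_convergence (thin_iff_summable_indicator.1 hA) (fun n => ?_)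
    (Eventually.of_forall fun y n => ?_)
  · refine tendsto_const_nhds.congr' ?_
    filter_upwards [eventually_ge_atTop n] with y hy
    exact (indicator_of_notMem (fun h => h.2.not_ge hy) _).symm
  · rw [Real.norm_of_nonneg (indicator_nonneg (fun _ _ => by positivity) n)]
    exact indicator_le_indicator_of_subset inter_subset_left (fun _ => by positivity) n

theorem Thin.hasDensity_zero (hA : Thin A) : HasDensity A 0 := by
  classical
  have hcount (x : ℕ) : (countIn A x : ℝ) / x =
      ∑' n, (A ∩ Icc 1 x).indicator (fun _ => (1 : ℝ) / x) n := by
    have hset : A ∩ Icc 1 x = ({n ∈ Finset.Icc 1 x | n ∈ A} : Finset ℕ) := by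
      rw [Finset.coe_filter, inter_comm]
      simp only [Finset.mem_Icc]
      rfl
    rw [hset, ← tsum_subtype, Finset.tsum_subtype' _ fun _ => (1 : ℝ) / x,
      Finset.sum_const, nsmul_eq_mul, mul_one_div]
    rfl
  unfold HasDensity
  simp only [hcount]
  rw [← tsum_zero (α := ℝ) (β := ℕ)]
  refine tendsto_tsum_of_dominated_convergence (thin_iff_summable_indicator.1 hA) (fun n => ?_)
    (Eventually.of_forall fun x n => ?_)
  · exact squeeze_zero (fun x => indicator_nonneg (fun _ _ => by positivity) n)
      (fun x => indicator_le_self' (fun _ _ => by positivity) n)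
      tendsto_one_div_atTop_nhds_zero_nat
  · rw [Real.norm_of_nonneg (indicator_nonneg (fun _ _ => by positivity) n)]
    by_cases hn : n ∈ A ∩ Icc 1 x
    · rw [indicator_of_mem hn, indicator_of_mem hn.1]
      exact one_div_le_one_div_of_le (mod_cast hn.2.1) (mod_cast hn.2.2)
    · rw [indicator_of_notMem hn]
      exact indicator_nonneg (fun _ _ => by positivity) n

theorem Thin.countIn_multiplesOf_inter_modEq_div_le (hA : Thin A) {M v : ℕ} (hM : 0 < M)
    (hv : 0 < v) (x : ℕ) :
    (countIn (multiplesOf A ∩ {n | n ≡ v [MOD M]}) x : ℝ) / x ≤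
      v / M * recipSum A + countIn A x / x := by
  classical
  rcases x.eq_zero_or_pos with rfl | hx
  · simpa using mul_nonneg (by positivity) (recipSum_nonneg A)
  set t := {a ∈ Finset.Icc 1 x | a ∈ A}
  have hcount : (countIn (multiplesOf A ∩ {n | n ≡ v [MOD M]}) x : ℝ) ≤
      x * (v / M * recipSum A) + countIn A x := by
    calc (countIn (multiplesOf A ∩ {n | n ≡ v [MOD M]}) x : ℝ)
        ≤ ∑ a ∈ t, (countIn ({n | a ∣ n} ∩ {n | n ≡ v [MOD M]}) x : ℝ) :=
          mod_cast countIn_multiplesOf_inter_le_sum A _ x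
      _ ≤ ∑ a ∈ t, (x * (v / M) * (1 / a) + 1 : ℝ) := by
          refine Finset.sum_le_sum fun a ha => ?_
          have ha0 : 0 < a := (Finset.mem_Icc.1 (Finset.mem_filter.1 ha).1).1
          refine (countIn_dvd_inter_modEq_le ha0 hM hv x).trans_eq ?_
          field_simp
      _ = x * (v / M) * ∑ a ∈ t, (1 : ℝ) / a + countIn A x := by
          rw [Finset.sum_add_distrib, ← Finset.mul_sum, Finset.sum_const, nsmul_one]
          rfl
      _ ≤ x * (v / M * recipSum A) + countIn A x := by
          rw [← mul_assoc]
          gcongr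
          exact hA.sum_le_recipSum fun a ha => (Finset.mem_filter.1 ha).2
  rw [div_le_iff₀ (by positivity)]
  field_simp at hcount ⊢
  linarith

theorem Thin.countIn_multiplesOf_div_le (hA : Thin A) (x : ℕ) :
    (countIn (multiplesOf A) x : ℝ) / x ≤ recipSum A + countIn A x / x := by
  simpa [Nat.modEq_one] using hA.countIn_multiplesOf_inter_modEq_div_le one_pos one_pos x

end Thin

section Density

theorem hasDensity_modEq {r : ℕ} (hr : 0 < r) (v : ℕ) :
    HasDensity {n | n ≡ v [MOD r]} (1 / r) := by
  refine tendsto_iff_dist_tendsto_zero.2 <| squeeze_zero' (Eventually.of_forall fun _ =>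
    dist_nonneg) ?_ tendsto_one_div_atTop_nhds_zero_nat
  filter_upwards [eventually_gt_atTop 0] with x hx
  rify at hx
  calc dist ((countIn {n | n ≡ v [MOD r]} x : ℝ) / x) (1 / r)
      = |(countIn {n | n ≡ v [MOD r]} x : ℝ) - x / r| / x := by
        rw [Real.dist_eq, ← abs_of_pos hx, ← abs_div, abs_of_pos hx]
        congr 1
        field_simp
    _ ≤ 1 / x := by
        gcongr
        exact abs_countIn_modEq_sub_div_le hr v x

open scoped Classical in
theorem countIn_eq_sum_countIn_modEq {P : Set ℕ} {r : ℕ} (hr : 0 < r)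
    (hP : ∀ ⦃m n⦄, m ≡ n [MOD r] → m ∈ P → n ∈ P) (x : ℕ) :
    countIn P x = ∑ v ∈ Finset.range r with v ∈ P, countIn {n | n ≡ v [MOD r]} x := by
  rw [countIn, Finset.card_eq_sum_card_fiberwise (f := (· % r)) (t := {v ∈ Finset.range r | v ∈ P})]
  · refine Finset.sum_congr rfl fun v hv => ?_
    obtain ⟨hvr, hvP⟩ := Finset.mem_filter.1 hv
    rw [Finset.filter_filter, countIn]
    congr! 2 with n
    have hmod : n % r = v ↔ n ≡ v [MOD r] := by
      rw [Nat.ModEq, Nat.mod_eq_of_lt (Finset.mem_range.1 hvr)]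
    rw [hmod]
    exact and_iff_right_of_imp fun hnv => hP hnv.symm hvP
  · intro n hn
    exact Finset.mem_filter.2 ⟨Finset.mem_range.2 (n.mod_lt hr),
      hP (n.mod_modEq r).symm (Finset.mem_filter.1 hn).2⟩

theorem exists_hasDensity_of_modEq_invariant {P : Set ℕ} {r : ℕ} (hr : 0 < r)
    (hP : ∀ ⦃m n⦄, m ≡ n [MOD r] → m ∈ P → n ∈ P) : ∃ δ, HasDensity P δ := by
  classical
  refine ⟨∑ v ∈ Finset.range r with v ∈ P, 1 / r, ?_⟩
  simp only [HasDensity, countIn_eq_sum_countIn_modEq hr hP, Nat.cast_sum, Finset.sum_div]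
  exact tendsto_finsetSum _ fun v _ => hasDensity_modEq hr v

theorem cauchySeq_of_forall_exists_eventually_dist_le {X : Type*} [PseudoMetricSpace X] {u : ℕ → X}
    (h : ∀ ε > 0, ∃ v : ℕ → X, CauchySeq v ∧ ∀ᶠ n in atTop, dist (u n) (v n) ≤ ε) :
    CauchySeq u := by
  refine Metric.cauchySeq_iff.2 fun ε hε => ?_
  obtain ⟨v, hv, huv⟩ := h (ε / 4) (by positivity)
  obtain ⟨N, hN⟩ := Metric.cauchySeq_iff.1 hv (ε / 4) (by positivity)
  obtain ⟨N', hN'⟩ := eventually_atTop.1 huv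
  refine ⟨max N N', fun m hm n hn => ?_⟩
  have hm' := hN' m (le_of_max_le_right hm)
  have hn' := hN' n (le_of_max_le_right hn)
  have hmn := hN m (le_of_max_le_left hm) n (le_of_max_le_left hn)
  calc dist (u m) (u n) ≤ dist (u m) (v m) + dist (v m) (v n) + dist (v n) (u n) :=
        dist_triangle4 _ _ _ _
    _ < ε := by rw [dist_comm (v n)]; linarith

theorem exists_hasDensity_of_approx {S : Set ℕ}
    (h : ∀ ε > 0, ∃ P E : Set ℕ, (∃ δ, HasDensity P δ) ∧
      (∀ n, 0 < n → n ∉ E → (n ∈ S ↔ n ∈ P)) ∧ ∀ᶠ x : ℕ in atTop, (countIn E x : ℝ) / x ≤ ε) :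
    ∃ δ, HasDensity S δ := by
  refine cauchySeq_tendsto_of_complete <|
    cauchySeq_of_forall_exists_eventually_dist_le fun ε hε => ?_
  obtain ⟨P, E, ⟨δ, hδ⟩, hSP, hE⟩ := h ε hε
  refine ⟨_, hδ.cauchySeq, hE.mono fun x hx => ?_⟩
  rw [Real.dist_eq, ← sub_div, abs_div, Nat.abs_cast]
  exact (div_le_div_of_nonneg_right (abs_countIn_sub_countIn_le hSP x) x.cast_nonneg).trans hx

end Density

section DeterminedByDivisors

variable {B S : Set ℕ}

theorem dvd_iff_dvd_of_modEq_factorial {m n y : ℕ} (hmn : m ≡ n [MOD y.factorial]) (hm : 0 < m)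
    (hn : 0 < n) (hmB : m ∉ multiplesOf (B ∩ Ioi y)) (hnB : n ∉ multiplesOf (B ∩ Ioi y)) :
    ∀ b ∈ B, b ∣ m ↔ b ∣ n := by
  intro b hb
  rcases le_or_gt b y with hby | hby
  · rcases b.eq_zero_or_pos with rfl | hb0
    · simp only [zero_dvd_iff, hm.ne', hn.ne']
    · exact hmn.dvd_iff (Nat.dvd_factorial hb0 hby)
  · exact iff_of_false (fun h => hmB ⟨b, ⟨hb, hby⟩, h⟩) fun h => hnB ⟨b, ⟨hb, hby⟩, h⟩

theorem DeterminedByDivisors.exists_hasDensity (hS : DeterminedByDivisors B S) (hB : Thin B) :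
    ∃ δ, HasDensity S δ := by
  refine exists_hasDensity_of_approx fun ε hε => ?_
  obtain ⟨y, hy⟩ := (hB.tendsto_recipSum_inter_Ioi.eventually_lt_const hε).exists
  have hA : Thin (B ∩ Ioi y) := hB.mono inter_subset_left
  let E := multiplesOf (B ∩ Ioi y)
  let P := {n | ∃ m ∈ S \ E, 0 < m ∧ m ≡ n [MOD y.factorial]}
  refine ⟨P, E, ?_, fun n hn hnE => ⟨fun hnS => ⟨n, ⟨hnS, hnE⟩, hn, rfl⟩, ?_⟩, ?_⟩
  · refine exists_hasDensity_of_modEq_invariant y.factorial_pos ?_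
    rintro n n' hnn' ⟨m, hm, hm0, hmn⟩
    exact ⟨m, hm, hm0, hmn.trans hnn'⟩
  · rintro ⟨m, ⟨hmS, hmE⟩, hm0, hmn⟩
    exact hS hm0 hn (dvd_iff_dvd_of_modEq_factorial hmn hm0 hn hmE hnE) hmS
  · filter_upwards [Tendsto.eventually_lt_const (sub_pos.2 hy) hA.hasDensity_zero] with x hx
    linarith [hA.countIn_multiplesOf_div_le x]

theorem DeterminedByDivisors.pos_of_hasDensity (hS : DeterminedByDivisors B S) (hB : Thin B)
    {m : ℕ} (hm : 0 < m) (hmS : m ∈ S) {δ : ℝ} (hδ : HasDensity S δ) : 0 < δ := by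
  have hm' : (0 : ℝ) < m := mod_cast hm
  obtain ⟨y, hmy, hy⟩ := ((eventually_ge_atTop m).and
    (hB.tendsto_recipSum_inter_Ioi.eventually_lt_const (one_div_pos.2 hm'))).exists
  set A := B ∩ Ioi y
  set M := y.factorial
  have hM : 0 < M := y.factorial_pos
  have hA : Thin A := hB.mono inter_subset_left
  have hmA : m ∉ multiplesOf A := fun ⟨a, ha, ham⟩ =>
    (ha.2.trans_le (Nat.le_of_dvd hm ham)).not_ge hmy
  have hcover (x : ℕ) : countIn {n | n ≡ m [MOD M]} x ≤
      countIn S x + countIn (multiplesOf A ∩ {n | n ≡ m [MOD M]}) x := by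
    refine (countIn_mono (fun n hn hnm => ?_) x).trans (countIn_union_le _ _ x)
    by_cases hnA : n ∈ multiplesOf A
    · exact Or.inr ⟨hnA, hnm⟩
    · exact Or.inl (hS hm hn (dvd_iff_dvd_of_modEq_factorial hnm.symm hm hn hmA hnA) hmS)
  have hcover_div (x : ℕ) : (countIn {n | n ≡ m [MOD M]} x : ℝ) / x ≤
      countIn S x / x + (m / M * recipSum A + countIn A x / x) := by
    calc (countIn {n | n ≡ m [MOD M]} x : ℝ) / x
        ≤ (countIn S x + countIn (multiplesOf A ∩ {n | n ≡ m [MOD M]}) x) / x := by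
          gcongr
          exact_mod_cast hcover x
      _ ≤ countIn S x / x + (m / M * recipSum A + countIn A x / x) := by
          rw [add_div]
          gcongr
          exact hA.countIn_multiplesOf_inter_modEq_div_le hM hm x
  have hle : (1 : ℝ) / M ≤ δ + (m / M * recipSum A + 0) :=
    le_of_tendsto_of_tendsto' (hasDensity_modEq hM m)
      (hδ.add (tendsto_const_nhds.add hA.hasDensity_zero)) hcover_div
  have hlt : (m : ℝ) / M * recipSum A < 1 / M := by
    calc (m : ℝ) / M * recipSum A < m / M * (1 / m) := by gcongr
      _ = 1 / M := by field_simp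
  linarith

end DeterminedByDivisors

section MobiusInversion

open ArithmeticFunction

variable {R : Type*} [AddCommGroup R] {f g : ℕ → R}

theorem liouville_mul_self {n : ℕ} (hn : n ≠ 0) : liouville n * liouville n = 1 := by
  rw [liouville_apply hn, ← mul_pow, neg_one_mul, neg_neg, one_pow]

theorem liouville_mul_moebius (d : ℕ) {m : ℕ} (hm : m ≠ 0) :
    liouville (d * m) * moebius m = if Squarefree m then liouville d else 0 := by
  split_ifs with hsq
  · rw [liouville_apply_mul, moebius_apply_of_squarefree hsq, ← liouville_apply hm, mul_assoc,
      liouville_mul_self hm, mul_one]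
  · rw [moebius_eq_zero_of_not_squarefree hsq, mul_zero]

theorem liouville_smul_eq_sum_squarefree (hfg : ∀ n, 0 < n → f n = ∑ d ∈ n.divisors, g d) {n : ℕ}
    (hn : 0 < n) :
    liouville n • g n = ∑ d ∈ n.divisors with Squarefree (n / d), liouville d • f d := by
  have hinv : ∑ p ∈ n.divisorsAntidiagonal, moebius p.1 • f p.2 = g n :=
    sum_eq_iff_sum_smul_moebius_eq.1 (fun n hn => (hfg n hn).symm) n hn
  rw [Nat.sum_divisorsAntidiagonal' fun a b => moebius a • f b] at hinv
  rw [← hinv, Finset.smul_sum, Finset.sum_filter]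
  refine Finset.sum_congr rfl fun d hd => ?_
  have hdn : d * (n / d) = n := Nat.mul_div_cancel' (Nat.dvd_of_mem_divisors hd)
  have hne : n / d ≠ 0 := right_ne_zero_of_mul (hdn.trans_ne hn.ne')
  rw [smul_smul, ← ite_zero_smul, ← liouville_mul_moebius d hne, hdn]

theorem squarefree_div_iff {d n : ℕ} (hd : d ∣ n) :
    Squarefree (n / d) ↔ ∀ k, d * k ^ 2 ∣ n → k = 1 := by
  simp only [Squarefree, Nat.isUnit_iff, ← sq, Nat.dvd_div_iff_mul_dvd hd]

theorem determinedByDivisors_support (hfg : ∀ n, 0 < n → f n = ∑ d ∈ n.divisors, g d) :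
    DeterminedByDivisors ({n | f n ≠ 0} * range fun k : ℕ => k ^ 2) {n | g n ≠ 0} := by
  intro m n hm hn hmn
  have hdvd {d : ℕ} (hfd : f d ≠ 0) (k : ℕ) : d * k ^ 2 ∣ m ↔ d * k ^ 2 ∣ n :=
    hmn _ (mul_mem_mul hfd ⟨k, rfl⟩)
  have hmem {d : ℕ} (hfd : f d ≠ 0) : (d ∈ m.divisors.filter fun d => Squarefree (m / d)) ↔
      d ∈ n.divisors.filter fun d => Squarefree (n / d) := by
    have hd : d ∣ m ↔ d ∣ n := by simpa using hdvd hfd 1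
    simp only [Finset.mem_filter, Nat.mem_divisors, hd, hm.ne', hn.ne', ne_eq, not_false_eq_true,
      and_true]
    refine and_congr_right fun hdn => ?_
    simp only [squarefree_div_iff hdn, squarefree_div_iff (hd.2 hdn), hdvd hfd]
  have hsum : liouville m • g m = liouville n • g n := by
    rw [liouville_smul_eq_sum_squarefree hfg hm, liouville_smul_eq_sum_squarefree hfg hn]
    refine Finset.sum_congr_of_eq_on_inter (fun d hdm hdn => ?_) (fun d hdn hdm => ?_)
      fun _ _ _ => rfl
    · rw [not_ne_iff.1 fun hfd => hdn ((hmem hfd).1 hdm), smul_zero]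
    · rw [not_ne_iff.1 fun hfd => hdm ((hmem hfd).2 hdn), smul_zero]
  refine mt fun hgn => ?_
  calc g m = liouville m • liouville m • g m := by
        rw [smul_smul, liouville_mul_self hm.ne', one_smul]
    _ = 0 := by rw [hsum, hgn, smul_zero, smul_zero]

theorem mobius_pair_thin_supp_f_density_supp_g_general
    (hfg : ∀ n, 0 < n → f n = ∑ d ∈ n.divisors, g d) (hne : ∃ n, 0 < n ∧ (f n ≠ 0 ∨ g n ≠ 0))
    (hthin : Thin {n | f n ≠ 0}) : ∃ δ : ℝ, 0 < δ ∧ HasDensity {n | g n ≠ 0} δ := by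
  obtain ⟨n, hn, hgn⟩ : ∃ n, 0 < n ∧ g n ≠ 0 := by
    by_contra! hg
    obtain ⟨n, hn, hfn | hgn⟩ := hne
    · exact hfn <| (hfg n hn).trans <|
        Finset.sum_eq_zero fun d hd => hg d (Nat.pos_of_mem_divisors hd)
    · exact hgn (hg n hn)
  have hB : Thin ({n | f n ≠ 0} * range fun k : ℕ => k ^ 2) := hthin.mul thin_range_sq
  have hS := determinedByDivisors_support hfg
  obtain ⟨δ, hδ⟩ := hS.exists_hasDensity hB
  exact ⟨δ, hS.pos_of_hasDensity hB hn hgn hδ, hδ⟩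

end MobiusInversion

/-- If `(f,g)` is a nonzero Möbius pair and `supp f` is thin, then `supp g`
has a positive asymptotic density. -/
theorem mobius_pair_thin_supp_f_density_supp_g (f g : ℕ → ℂ)
    (hfg : MobiusPair f g) (hne : ∃ n : ℕ, 0 < n ∧ (f n ≠ 0 ∨ g n ≠ 0))
    (hthin : Thin {n : ℕ | f n ≠ 0}) :
    ∃ δ : ℝ, 0 < δ ∧ HasDensity {n : ℕ | g n ≠ 0} δ := by
  exact mobius_pair_thin_supp_f_density_supp_g_general hfg hne hthin
end

section
/- For each natural number P, the set of squarefree positive integers that are relatively prime to P possesses an asymptotic density, equal to (6/π²)·∏_{p ∣ P} (1 + 1/p)^{-1}, where the product runs over the distinct primes p dividing P. -/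
open Filter

/-!
Möbius inversion over square divisors gives `1_{squarefree}(n) = ∑_{d² ∣ n} μ(d)`, so the number of
squarefree `n ≤ x` in a set `A` is `∑_d μ(d) #{m ≤ x / d² : d² m ∈ A}`. After division by `x` the
`d`-th term is at most `1 / d²`, so dominated convergence lets `x → ∞` termwise. For `A` the
integers coprime to `P`, the set `{m : d² m ∈ A}` is `A` or empty according as `d` is coprime to `P`
or not, and `A` is periodic of density `∏ (1 - 1/p)`. This leaves `∑_{(d, P) = 1} μ(d) / d²`, the
value at `2` of the inverse of the L-function of the trivial character modulo `P`.
-/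

open ArithmeticFunction Finset Function Topology
open scoped ArithmeticFunction.Moebius

section Counting

variable (A : Set ℕ) (x : ℕ)

lemma countIn_eq_card [DecidablePred (· ∈ A)] : countIn A x = #{n ∈ Icc 1 x | n ∈ A} := by
  unfold countIn
  congr

lemma countIn_le : countIn A x ≤ x := by
  classical
  simpa [countIn_eq_card] using card_filter_le (Icc 1 x) (· ∈ A)

@[simp]
lemma countIn_zero : countIn A 0 = 0 :=
  Nat.le_zero.mp (countIn_le A 0)

lemma countIn_div_le (k : ℕ) : (countIn A (x / k) : ℝ) / x ≤ 1 / k := by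
  rcases x.eq_zero_or_pos with rfl | hx
  · simp
  calc (countIn A (x / k) : ℝ) / x
      ≤ ((x / k : ℕ) : ℝ) / x := by gcongr; exact countIn_le A _
    _ ≤ (x / k : ℝ) / x := by gcongr; exact Nat.cast_div_le
    _ = 1 / k := by field_simp

lemma countIn_sep_dvd (k : ℕ) :
    countIn {n ∈ A | k ∣ n} x = countIn {m | k * m ∈ A} (x / k) := by
  classical
  rcases k.eq_zero_or_pos with rfl | hk
  · simp +contextual [countIn_eq_card, Nat.one_le_iff_ne_zero]
  have mul_mem_Icc (m : ℕ) : k * m ∈ Icc 1 x ↔ m ∈ Icc 1 (x / k) := by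
    simp [Nat.le_div_iff_mul_le hk, mul_comm k, Nat.one_le_iff_ne_zero, hk.ne']
  rw [countIn_eq_card, countIn_eq_card]
  refine (card_nbij (k * ·) (fun m hm => ?_) (fun _ _ _ _ => Nat.eq_of_mul_eq_mul_left hk)
    fun n hn => ?_).symm
  · simpa [-mem_Icc, mul_mem_Icc] using hm
  · obtain ⟨hn, hA, m, rfl⟩ := mem_filter.mp hn
    exact ⟨m, mem_filter.mpr ⟨(mul_mem_Icc m).mp hn, hA⟩, rfl⟩

lemma countIn_add_of_periodic {p : ℕ → Prop} [DecidablePred p] {a : ℕ} (hp : Periodic p a) :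
    countIn {n | p n} (x + a) = countIn {n | p n} x + a.count p := by
  classical
  have split : Icc 1 (x + a) = Icc 1 x ∪ Ico (x + 1) (x + 1 + a) := by
    simp only [← Ico_add_one_right_eq_Icc, add_right_comm x a 1]
    exact (Ico_union_Ico_eq_Ico (by lia) (by lia)).symm
  have disj : Disjoint (Icc 1 x) (Ico (x + 1) (x + 1 + a)) :=
    Ico_add_one_right_eq_Icc 1 x ▸ Ico_disjoint_Ico_consecutive 1 (x + 1) (x + 1 + a)
  rw [← Nat.filter_Ico_card_eq_of_periodic (x + 1) a p hp, countIn_eq_card, countIn_eq_card, split,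
    filter_union, card_union_of_disjoint (disjoint_filter_filter disj)]
  simp only [Set.mem_ofPred_eq]

end Counting

section Density

lemma hasDensity_empty : HasDensity ∅ 0 := by
  classical
  simp [HasDensity, countIn_eq_card]

lemma tendsto_div_natCast_of_periodic {f : ℕ → ℝ} {a : ℕ} (ha : a ≠ 0) (hf : Periodic f a) :
    Tendsto (fun x : ℕ => f x / x) atTop (𝓝 0) := by
  have bound (x : ℕ) : ‖f x‖ ≤ ∑ r ∈ range a, ‖f r‖ := by
    rw [← hf.map_mod_nat x]
    exact single_le_sum (f := fun r => ‖f r‖) (fun _ _ => norm_nonneg _)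
      (mem_range.mpr (Nat.mod_lt x (Nat.pos_of_ne_zero ha)))
  simpa only [div_eq_mul_inv] using
    bdd_le_mul_tendsto_zero' _ (.of_forall bound) tendsto_inv_atTop_nhds_zero_nat

lemma hasDensity_of_periodic {p : ℕ → Prop} [DecidablePred p] {a : ℕ} (ha : a ≠ 0)
    (hp : Periodic p a) : HasDensity {n | p n} (a.count p / a) := by
  set δ : ℝ := a.count p / a
  have periodic_error : Periodic (fun x : ℕ => (countIn {n | p n} x : ℝ) - δ * x) a := by
    intro x
    have δ_mul : δ * a = a.count p := by simp [δ, ha]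
    simp only [countIn_add_of_periodic x hp, Nat.cast_add]
    linear_combination -δ_mul
  have h := (tendsto_div_natCast_of_periodic ha periodic_error).add_const δ
  rw [zero_add] at h
  refine h.congr' ?_
  filter_upwards [eventually_ne_atTop 0] with x hx
  field_simp
  ring

lemma hasDensity_coprime (N : ℕ) [NeZero N] :
    HasDensity {n | n.Coprime N} (∏ p ∈ N.primeFactors, (1 - 1 / (p : ℝ))) := by
  have totient_div : (N.count N.Coprime / N : ℝ) = ∏ p ∈ N.primeFactors, (1 - 1 / (p : ℝ)) := by
    rw [Nat.count_eq_card_filter_range, ← Nat.totient_eq_card_coprime,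
      div_eq_iff (NeZero.ne (N : ℝ)), mul_comm]
    simpa using congrArg (Rat.cast : ℚ → ℝ) (Nat.totient_eq_mul_prod_factors N)
  simpa only [totient_div, Nat.coprime_comm] using
    hasDensity_of_periodic (NeZero.ne N) (Nat.periodic_coprime N)

lemma hasDensity_mul_coprime (N : ℕ) [NeZero N] (k : ℕ) :
    HasDensity {m | (k * m).Coprime N}
      (if k.Coprime N then ∏ p ∈ N.primeFactors, (1 - 1 / (p : ℝ)) else 0) := by
  split_ifs with hk
  · simpa only [Nat.coprime_mul_iff_left, and_iff_right hk] using hasDensity_coprime N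
  · simpa [Nat.coprime_mul_iff_left, hk] using hasDensity_empty

lemma HasDensity.tendsto_countIn_div {A : Set ℕ} {δ : ℝ} (h : HasDensity A δ) (k : ℕ) :
    Tendsto (fun x : ℕ => (countIn A (x / k) : ℝ) / x) atTop (𝓝 (δ / k)) := by
  rcases k.eq_zero_or_pos with rfl | hk
  · simp
  have tendsto_div : Tendsto (fun x : ℕ => ((x / k : ℕ) : ℝ) / x) atTop (𝓝 (k : ℝ)⁻¹) := by
    simpa [Function.comp_def, Nat.floor_div_natCast, ← div_eq_inv_mul] using
      (tendsto_nat_floor_mul_div_atTop (inv_nonneg.mpr k.cast_nonneg)).comp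
        (tendsto_natCast_atTop_atTop (R := ℝ))
  refine ((h.comp (Nat.tendsto_div_const_atTop hk.ne')).mul tendsto_div).congr fun x => ?_
  rcases eq_or_ne (x / k) 0 with h0 | h0
  · simp [h0]
  · simp only [comp_apply]
    field_simp

end Density

section Squarefree

lemma sq_dvd_sq_mul_iff_of_squarefree {R : Type*} [CommMonoidWithZero R] [GCDMonoid R] {a : R}
    (ha : Squarefree a) (b d : R) : d ^ 2 ∣ b ^ 2 * a ↔ d ∣ b := by
  refine ⟨fun h => ?_, fun h => (pow_dvd_pow_of_dvd h 2).mul_right a⟩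
  obtain ⟨d', b', hd, hb, coprime⟩ := extract_gcd d b
  rw [gcd_isUnit_iff_isRelPrime] at coprime
  generalize gcd d b = g at hd hb
  subst hd hb
  rcases eq_or_ne g 0 with rfl | hg
  · simp
  rw [mul_pow, mul_pow, mul_assoc, mul_dvd_mul_iff_left (pow_ne_zero 2 hg)] at h
  have d'_unit : IsUnit d' := ha d' (by simpa only [sq] using coprime.pow.dvd_of_dvd_mul_left h)
  exact mul_dvd_mul_left _ d'_unit.dvd

lemma sum_moebius_sq_dvd (n : ℕ) :
    ∑ d ∈ n.divisors with d ^ 2 ∣ n, μ d = if Squarefree n then 1 else 0 := by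
  obtain ⟨a, b, rfl, ha⟩ := Nat.sq_mul_squarefree n
  rcases eq_or_ne b 0 with rfl | hb
  · simp
  have divisors_eq : {d ∈ (b ^ 2 * a).divisors | d ^ 2 ∣ b ^ 2 * a} = b.divisors := by
    ext d
    simp only [mem_filter, Nat.mem_divisors, sq_dvd_sq_mul_iff_of_squarefree ha]
    exact ⟨fun h => ⟨h.2, hb⟩, fun h => ⟨⟨(h.1.trans (dvd_pow_self b two_ne_zero)).mul_right a,
      mul_ne_zero (pow_ne_zero 2 hb) ha.ne_zero⟩, h.1⟩⟩
  have squarefree_iff : Squarefree (b ^ 2 * a) ↔ b = 1 :=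
    ⟨fun h => Nat.isUnit_iff.mp (h b (by simp [sq])), by rintro rfl; simpa⟩
  rw [divisors_eq, ← coe_mul_zeta_apply, moebius_mul_coe_zeta, one_apply]
  simp only [squarefree_iff]

lemma countIn_squarefree_inter (A : Set ℕ) (x : ℕ) :
    (countIn {n | Squarefree n ∧ n ∈ A} x : ℤ) =
      ∑ d ∈ Icc 1 x, μ d * countIn {m | d ^ 2 * m ∈ A} (x / d ^ 2) := by
  classical
  have indicator_eq {n : ℕ} (hn : n ∈ Icc 1 x) :
      (if Squarefree n then 1 else 0 : ℤ) = ∑ d ∈ Icc 1 x, if d ^ 2 ∣ n then μ d else 0 := by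
    rw [← sum_moebius_sq_dvd, ← sum_filter]
    refine sum_congr (Finset.ext fun d => ?_) fun _ _ => rfl
    rw [mem_Icc] at hn
    simp only [mem_filter, mem_Icc, Nat.mem_divisors, and_congr_left_iff]
    intro hd
    have hdn : d ∣ n := (dvd_pow_self d two_ne_zero).trans hd
    exact ⟨fun _ => ⟨Nat.pos_of_dvd_of_pos hdn hn.1, (Nat.le_of_dvd hn.1 hdn).trans hn.2⟩,
      fun _ => ⟨hdn, Nat.one_le_iff_ne_zero.mp hn.1⟩⟩
  calc (countIn {n | Squarefree n ∧ n ∈ A} x : ℤ)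
      = ∑ n ∈ Icc 1 x with n ∈ A, if Squarefree n then 1 else 0 := by
        simp [countIn_eq_card, filter_filter, and_comm]
    _ = ∑ n ∈ Icc 1 x with n ∈ A, ∑ d ∈ Icc 1 x, if d ^ 2 ∣ n then μ d else 0 :=
        sum_congr rfl fun n hn => indicator_eq (mem_of_mem_filter n hn)
    _ = ∑ d ∈ Icc 1 x, μ d * countIn {n ∈ A | d ^ 2 ∣ n} x := by
        rw [sum_comm]
        simp [← sum_filter, filter_filter, countIn_eq_card, mul_comm]
    _ = ∑ d ∈ Icc 1 x, μ d * countIn {m | d ^ 2 * m ∈ A} (x / d ^ 2) := by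
        simp only [countIn_sep_dvd]

lemma countIn_squarefree_inter_div_eq_tsum (A : Set ℕ) (x : ℕ) :
    (countIn {n | Squarefree n ∧ n ∈ A} x : ℝ) / x =
      ∑' d : ℕ, (μ d : ℝ) * (countIn {m | d ^ 2 * m ∈ A} (x / d ^ 2) / x) := by
  rw [tsum_eq_sum (s := Icc 1 x), ← Int.cast_natCast, countIn_squarefree_inter]
  · push_cast
    rw [sum_div]
    simp only [mul_div_assoc]
  · intro d hd
    rcases d.eq_zero_or_pos with rfl | hpos
    · simp
    have lt_d : x < d := by simpa [Nat.one_le_iff_ne_zero, hpos.ne'] using hd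
    have div_eq_zero : x / d ^ 2 = 0 :=
      Nat.div_eq_of_lt (lt_d.trans_le (Nat.le_self_pow two_ne_zero d))
    simp [div_eq_zero]

lemma hasDensity_squarefree_inter {A : Set ℕ} {δ : ℕ → ℝ}
    (h : ∀ d, Squarefree d → HasDensity {m | d ^ 2 * m ∈ A} (δ d)) :
    HasDensity {n | Squarefree n ∧ n ∈ A} (∑' d : ℕ, (μ d : ℝ) * (δ d / d ^ 2)) := by
  simp only [HasDensity, countIn_squarefree_inter_div_eq_tsum]
  refine tendsto_tsum_of_dominated_convergence (Real.summable_one_div_nat_pow.mpr one_lt_two)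
    (fun d => ?_) (.of_forall fun x d => ?_)
  · by_cases hd : Squarefree d
    · rw [← Nat.cast_pow]
      exact ((h d hd).tendsto_countIn_div _).const_mul _
    · simp [moebius_eq_zero_of_not_squarefree hd]
  · have moebius_le : ‖(μ d : ℝ)‖ ≤ 1 := by
      rw [Real.norm_eq_abs]
      exact_mod_cast abs_moebius_le_one (n := d)
    rw [norm_mul, Real.norm_of_nonneg (by positivity : (0 : ℝ) ≤ _ / _), ← Nat.cast_pow,
      ← one_mul (1 / _)]
    exact mul_le_mul moebius_le (countIn_div_le _ x _) (by positivity) zero_le_one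

end Squarefree

section MoebiusSum

open DirichletCharacter

variable (N : ℕ) [NeZero N]

lemma LSeries_trivChar_mul_moebius {s : ℂ} (hs : 1 < s.re) :
    LSeries (fun n => (1 : DirichletCharacter ℂ N) n * μ n) s =
      ((∏ p ∈ N.primeFactors, (1 - (p : ℂ) ^ (-s))) * riemannZeta s)⁻¹ := by
  have ne_one : s ≠ 1 := by
    rintro rfl
    simp at hs
  rw [← LFunctionTrivChar_eq_mul_riemannZeta ne_one, LFunctionTrivChar, LFunction_eq_LSeries _ hs]
  exact eq_inv_of_mul_eq_one_right (LSeries.mul_mu_eq_one _ hs)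

lemma tsum_moebius_coprime_div_sq :
    ∑' d : ℕ, (if d.Coprime N then (μ d : ℝ) else 0) / d ^ 2 =
      6 / Real.pi ^ 2 * ∏ p ∈ N.primeFactors, (1 - 1 / (p : ℝ) ^ 2)⁻¹ := by
  have h := LSeries_trivChar_mul_moebius N (s := 2) (by norm_num)
  have term_eq (d : ℕ) : LSeries.term (fun n => (1 : DirichletCharacter ℂ N) n * μ n) 2 d =
      (((if d.Coprime N then (μ d : ℝ) else 0) / d ^ 2 : ℝ) : ℂ) := by
    rcases eq_or_ne d 0 with rfl | hd
    · simp
    rw [LSeries.term_of_ne_zero hd]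
    split_ifs with hdN
    · simp [MulChar.one_apply ((ZMod.isUnit_iff_coprime d N).mpr hdN)]
    · simp [MulChar.map_nonunit _ (mt (ZMod.isUnit_iff_coprime d N).mp hdN)]
  simp only [LSeries, term_eq, ← Complex.ofReal_tsum, riemannZeta_two, Complex.cpow_neg,
    Complex.cpow_ofNat] at h
  refine Complex.ofReal_injective (h.trans ?_)
  push_cast
  rw [prod_inv_distrib, mul_inv, inv_div, mul_comm]
  simp only [one_div]

lemma tsum_moebius_mul_prod_coprime_div_sq :
    ∑' d : ℕ, (μ d : ℝ) *
        ((if d.Coprime N then ∏ p ∈ N.primeFactors, (1 - 1 / (p : ℝ)) else 0) / d ^ 2) =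
      6 / Real.pi ^ 2 * ∏ p ∈ N.primeFactors, (1 + 1 / (p : ℝ))⁻¹ := by
  have euler_factor {p : ℕ} (hp : p ∈ N.primeFactors) :
      (1 - 1 / (p : ℝ)) * (1 - 1 / (p : ℝ) ^ 2)⁻¹ = (1 + 1 / (p : ℝ))⁻¹ := by
    have one_lt : (1 : ℝ) < p := by exact_mod_cast (Nat.prime_of_mem_primeFactors hp).one_lt
    have one_sub_ne : 1 - 1 / (p : ℝ) ≠ 0 := by
      rw [one_div]
      exact (sub_pos.mpr (inv_lt_one_of_one_lt₀ one_lt)).ne'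
    rw [show 1 - 1 / (p : ℝ) ^ 2 = (1 - 1 / (p : ℝ)) * (1 + 1 / p) by ring, mul_inv,
      mul_inv_cancel_left₀ one_sub_ne]
  rw [← prod_congr rfl fun p hp => euler_factor hp, prod_mul_distrib, mul_left_comm,
    ← tsum_moebius_coprime_div_sq, ← tsum_mul_left]
  refine tsum_congr fun d => ?_
  split_ifs <;> ring

end MoebiusSum

/-- The squarefree integers coprime to `P` have asymptotic density
`(6/π²) ∏_{p ∣ P} (1 + 1/p)⁻¹`. -/
theorem squarefree_coprime_density (P : ℕ) (hP : 0 < P) :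
    HasDensity {n : ℕ | Squarefree n ∧ Nat.Coprime n P}
      (6 / Real.pi ^ 2 * ∏ p ∈ P.primeFactors, (1 + 1 / (p : ℝ))⁻¹) := by
  have : NeZero P := ⟨hP.ne'⟩
  rw [← tsum_moebius_mul_prod_coprime_div_sq]
  refine hasDensity_squarefree_inter (A := {n | n.Coprime P}) fun d _ => ?_
  have density := hasDensity_mul_coprime P (d ^ 2)
  simpa only [Set.mem_ofPred_eq, Nat.coprime_pow_left_iff zero_lt_two] using density
end
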